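/- Let B ⊂ ℝ^d be an open Euclidean ball and G the semilinear operator defined in the context. Suppose λ_B ∈ ℝ and ψ ∈ C²(B) ∩ C(B̄) satisfy ψ > 0 in B, ψ = 0 on ∂B and Gψ = λ_B ψ in B. Then λ_B equals the generalized principal eigenvalue of G on B, namely λ_B = inf{ λ ∈ ℝ : there exists φ ∈ C²(B) ∩ C(B̄) with φ > 0 in B and Gφ ≤ λφ in B }. (Identification part of Theorem 3.1, classical-solution rendering.) -/

import Mathlib

/-!
Let `ψ` be the eigenfunction, `φ` a competitor for `lam`, and suppose `lam < lamB`. If one function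
is touched from above by another at an interior point, the two share value and gradient there and
the Hessians are ordered, hence so are the values of `G`. As `G` is positively homogeneous, no
multiple `t • φ` can therefore touch `ψ` from above at an interior point. With `t` the maximum of
`ψ / φ` one would get such a contact, except that both functions may vanish on the boundary and the
ratio need not attain its supremum inside.

The remedy is a barrier `h`, bounded away from zero, with `L_u h ≤ lam * h` near the boundary for
every control `u`. Since `G (φ + h) ≤ G φ + sup_u L_u h`, the functions `t • φ + s • h` are
supersolutions near the boundary and cannot touch `ψ` there either. So if `t` is the maximum of
`ψ / φ` over a compact set whose complement is controlled by `h`, then `ψ ≤ t • φ` everywhere, and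
the maximum point is an interior contact after all.
-/

open Metric Set MeasureTheory

noncomputable def sdv {d : ℕ} (φ : EuclideanSpace ℝ (Fin d) → ℝ)
    (x : EuclideanSpace ℝ (Fin d)) (i j : Fin d) : ℝ :=
  fderiv ℝ (fun y => fderiv ℝ φ y (EuclideanSpace.single j 1)) x (EuclideanSpace.single i 1)

/-- The semilinear operator
`Gφ(x) = Σ_{i,j} a_{ij}(x) ∂²φ/∂x_i∂x_j(x) + inf_{u∈U} (b(x,u)·∇φ(x) + r(x,u) φ(x))`. -/
noncomputable def Gop {d : ℕ} {U : Type*}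
    (a : EuclideanSpace ℝ (Fin d) → Matrix (Fin d) (Fin d) ℝ)
    (b : EuclideanSpace ℝ (Fin d) → U → EuclideanSpace ℝ (Fin d))
    (r : EuclideanSpace ℝ (Fin d) → U → ℝ)
    (φ : EuclideanSpace ℝ (Fin d) → ℝ) (x : EuclideanSpace ℝ (Fin d)) : ℝ :=
  (∑ i, ∑ j, a x i j * sdv φ x i j)
    + ⨅ u : U, ((inner ℝ (b x u) (gradient φ x) : ℝ) + r x u * φ x)

/-- The quadratic form `zᵀ A z`. -/
noncomputable def quadForm {d : ℕ}
    (A : Matrix (Fin d) (Fin d) ℝ) (z : EuclideanSpace ℝ (Fin d)) : ℝ :=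
  ∑ i, ∑ j, z i * A i j * z j

/-- The linear operator `L_u φ = Σ_{i,j} a_{ij} ∂²φ/∂x_i∂x_j + b(·,u)·∇φ + r(·,u) φ` obtained by
freezing the control `u`, so that `G` is the infimum of the `L_u`. -/
noncomputable def Lop {d : ℕ} {U : Type*}
    (a : EuclideanSpace ℝ (Fin d) → Matrix (Fin d) (Fin d) ℝ)
    (b : EuclideanSpace ℝ (Fin d) → U → EuclideanSpace ℝ (Fin d))
    (r : EuclideanSpace ℝ (Fin d) → U → ℝ) (u : U)
    (φ : EuclideanSpace ℝ (Fin d) → ℝ) (x : EuclideanSpace ℝ (Fin d)) : ℝ :=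
  (∑ i, ∑ j, a x i j * sdv φ x i j) + ((inner ℝ (b x u) (gradient φ x) : ℝ) + r x u * φ x)

section SecondDerivatives

theorem deriv_deriv_nonpos_of_isLocalMax {f : ℝ → ℝ} {x : ℝ} (hf : ContinuousAt f x)
    (hmax : IsLocalMax f x) : deriv (deriv f) x ≤ 0 := by
  by_contra! hpos
  have hmin : IsLocalMin f x := isLocalMin_of_deriv_deriv_pos hpos hmax.deriv_eq_zero hf
  have hconst : f =ᶠ[nhds x] fun _ => f x := by
    filter_upwards [hmax, hmin] with y h₁ h₂ using le_antisymm h₁ h₂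
  have hzero : deriv (deriv f) x = 0 := by simpa using hconst.deriv.deriv_eq
  exact hpos.ne' hzero

variable {E : Type*} [NormedAddCommGroup E] [NormedSpace ℝ E]

theorem deriv_deriv_comp_add_smul {v : E → ℝ} {x : E} (hv : ContDiffAt ℝ 2 v x) (z : E) :
    deriv (deriv fun τ : ℝ => v (x + τ • z)) 0 = fderiv ℝ (fderiv ℝ v) x z z := by
  have hline (τ : ℝ) : HasDerivAt (fun τ : ℝ => x + τ • z) z τ := by
    simpa using ((hasDerivAt_id τ).smul_const z).const_add x
  have hline_tendsto : Filter.Tendsto (fun τ : ℝ => x + τ • z) (nhds 0) (nhds x) := by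
    simpa using (hline 0).continuousAt.tendsto
  have hderiv : deriv (fun τ : ℝ => v (x + τ • z)) =ᶠ[nhds 0]
      fun τ => fderiv ℝ v (x + τ • z) z := by
    filter_upwards [hline_tendsto.eventually (hv.eventually (by simp))] with τ hτ
    exact ((hτ.differentiableAt two_ne_zero).hasFDerivAt.comp_hasDerivAt τ (hline τ)).deriv
  have hfderiv : HasFDerivAt (fderiv ℝ v) (fderiv ℝ (fderiv ℝ v) x) (x + (0 : ℝ) • z) := by
    simpa using ((hv.fderiv_right (m := 1) le_rfl).differentiableAt one_ne_zero).hasFDerivAt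
  have hderiv₂ : HasDerivAt (fun τ : ℝ => fderiv ℝ v (x + τ • z)) (fderiv ℝ (fderiv ℝ v) x z) 0 :=
    hfderiv.comp_hasDerivAt 0 (hline 0)
  rw [hderiv.deriv_eq]
  simpa using (hderiv₂.clm_apply (hasDerivAt_const 0 z)).deriv

theorem fderiv_fderiv_nonpos_of_isLocalMax {v : E → ℝ} {x : E} (hv : ContDiffAt ℝ 2 v x)
    (hmax : IsLocalMax v x) (z : E) : fderiv ℝ (fderiv ℝ v) x z z ≤ 0 := by
  have hline : ContinuousAt (fun τ : ℝ => x + τ • z) 0 := by fun_prop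
  have hx : x + (0 : ℝ) • z = x := by simp
  rw [← deriv_deriv_comp_add_smul hv]
  refine deriv_deriv_nonpos_of_isLocalMax
    (ContinuousAt.comp' (by rw [hx]; exact hv.continuousAt) hline) ?_
  have hmax' : IsLocalMax v (x + (0 : ℝ) • z) := hx.symm ▸ hmax
  exact IsLocalMax.comp_continuous hmax' hline

end SecondDerivatives

section Hessian

variable {d : ℕ} {v w : EuclideanSpace ℝ (Fin d) → ℝ} {x : EuclideanSpace ℝ (Fin d)}

theorem sdv_eq_fderiv_fderiv (hv : ContDiffAt ℝ 2 v x) (i j : Fin d) :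
    sdv v x i j = fderiv ℝ (fderiv ℝ v) x (EuclideanSpace.single i 1)
      (EuclideanSpace.single j 1) := by
  have hfderiv : DifferentiableAt ℝ (fderiv ℝ v) x :=
    (hv.fderiv_right (m := 1) le_rfl).differentiableAt one_ne_zero
  rw [sdv, fderiv_clm_apply hfderiv (differentiableAt_const _)]
  simp

theorem sdv_eq_iteratedFDeriv (hv : ContDiffAt ℝ 2 v x) (i j : Fin d) :
    sdv v x i j = iteratedFDeriv ℝ 2 v x
      ![EuclideanSpace.single i 1, EuclideanSpace.single j 1] := by
  simp [sdv_eq_fderiv_fderiv hv, iteratedFDeriv_two_apply]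

theorem sdv_add (hv : ContDiffAt ℝ 2 v x) (hw : ContDiffAt ℝ 2 w x) (i j : Fin d) :
    sdv (v + w) x i j = sdv v x i j + sdv w x i j := by
  rw [sdv_eq_iteratedFDeriv (v := v + w) (hv.add hw), iteratedFDeriv_add_apply hv hw,
    sdv_eq_iteratedFDeriv hv, sdv_eq_iteratedFDeriv hw]
  rfl

theorem sdv_sub (hv : ContDiffAt ℝ 2 v x) (hw : ContDiffAt ℝ 2 w x) (i j : Fin d) :
    sdv (v - w) x i j = sdv v x i j - sdv w x i j := by
  rw [sdv_eq_iteratedFDeriv (v := v - w) (hv.sub hw), iteratedFDeriv_sub_apply hv hw,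
    sdv_eq_iteratedFDeriv hv, sdv_eq_iteratedFDeriv hw]
  rfl

theorem sdv_const_smul (hv : ContDiffAt ℝ 2 v x) (t : ℝ) (i j : Fin d) :
    sdv (t • v) x i j = t * sdv v x i j := by
  rw [sdv_eq_iteratedFDeriv (v := t • v) (hv.const_smul t),
    iteratedFDeriv_const_smul_apply hv, sdv_eq_iteratedFDeriv hv]
  rfl

theorem isSymm_sdv (hv : ContDiffAt ℝ 2 v x) : (Matrix.of (sdv v x)).IsSymm := by
  ext i j
  simpa [sdv_eq_fderiv_fderiv hv] using (hv.isSymmSndFDerivAt (by simp)).eq _ _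

theorem quadForm_sdv (hv : ContDiffAt ℝ 2 v x) (z : EuclideanSpace ℝ (Fin d)) :
    quadForm (Matrix.of (sdv v x)) z = fderiv ℝ (fderiv ℝ v) x z z := by
  have hz : z = ∑ i, z i • EuclideanSpace.single i (1 : ℝ) := by
    simpa using ((EuclideanSpace.basisFun (Fin d) ℝ).sum_repr z).symm
  conv_rhs => rw [hz]
  simp only [quadForm, Matrix.of_apply, sdv_eq_fderiv_fderiv hv, map_sum, sum_apply, map_smul,
    smul_apply, smul_eq_mul, Finset.mul_sum]
  rw [Finset.sum_comm]
  exact Finset.sum_congr rfl fun i _ => Finset.sum_congr rfl fun j _ => by ring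

theorem sum_mul_nonpos_of_quadForm {A B : Matrix (Fin d) (Fin d) ℝ}
    (hA : ∀ z, 0 ≤ quadForm A z) (hB_symm : B.IsSymm) (hB : ∀ z, quadForm B z ≤ 0) :
    ∑ i, ∑ j, A i j * B i j ≤ 0 := by
  have hB_neg : (-B).PosSemidef := by
    refine .of_dotProduct_mulVec_nonneg (by simpa using! hB_symm.neg) fun z => ?_
    simpa [quadForm, dotProduct, Matrix.mulVec, Finset.mul_sum, mul_assoc]
      using hB (WithLp.toLp 2 z)
  obtain ⟨n, w, hw⟩ := Matrix.posSemidef_iff_eq_sum_vecMulVec.mp hB_neg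
  have hB_eq (i j : Fin d) : B i j = -∑ k, w k i * w k j := by
    rw [← neg_neg (B i j), ← Matrix.neg_apply, hw, Matrix.sum_apply]
    simp [Matrix.vecMulVec_apply]
  calc ∑ i, ∑ j, A i j * B i j
      = -∑ k, quadForm A (WithLp.toLp 2 (w k)) := by
        simp only [hB_eq, quadForm, mul_neg, Finset.mul_sum, Finset.sum_neg_distrib]
        rw [Finset.sum_comm (s := Finset.univ (α := Fin n))]
        refine congrArg _ (Finset.sum_congr rfl fun i _ => ?_)
        rw [Finset.sum_comm]
        exact Finset.sum_congr rfl fun k _ => Finset.sum_congr rfl fun j _ => by ring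
    _ ≤ 0 := neg_nonpos.2 (Finset.sum_nonneg fun k _ => hA _)

theorem sum_mul_sdv_nonpos_of_isLocalMax {A : Matrix (Fin d) (Fin d) ℝ}
    (hA : ∀ z, 0 ≤ quadForm A z) (hv : ContDiffAt ℝ 2 v x) (hmax : IsLocalMax v x) :
    ∑ i, ∑ j, A i j * sdv v x i j ≤ 0 :=
  sum_mul_nonpos_of_quadForm hA (isSymm_sdv hv) fun z =>
    (quadForm_sdv hv z).trans_le (fderiv_fderiv_nonpos_of_isLocalMax hv hmax z)

end Hessian

section SemilinearOperator

variable {d : ℕ} {U : Type*} {a : EuclideanSpace ℝ (Fin d) → Matrix (Fin d) (Fin d) ℝ}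
  {b : EuclideanSpace ℝ (Fin d) → U → EuclideanSpace ℝ (Fin d)}
  {r : EuclideanSpace ℝ (Fin d) → U → ℝ} {ψ φ h : EuclideanSpace ℝ (Fin d) → ℝ}
  {x : EuclideanSpace ℝ (Fin d)} {lam lamB : ℝ}

theorem Lop_add (hφ : ContDiffAt ℝ 2 φ x) (hh : ContDiffAt ℝ 2 h x) (u : U) :
    Lop a b r u (φ + h) x = Lop a b r u φ x + Lop a b r u h x := by
  have hfderiv : fderiv ℝ (φ + h) x = fderiv ℝ φ x + fderiv ℝ h x :=
    fderiv_add (hφ.differentiableAt two_ne_zero) (hh.differentiableAt two_ne_zero)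
  simp only [Lop, sdv_add hφ hh, inner_gradient_right, conj_trivial, hfderiv, add_apply,
    Pi.add_apply, mul_add, Finset.sum_add_distrib]
  ring

theorem Lop_const_smul (hφ : ContDiffAt ℝ 2 φ x) (t : ℝ) (u : U) :
    Lop a b r u (t • φ) x = t * Lop a b r u φ x := by
  have hfderiv : fderiv ℝ (t • φ) x = t • fderiv ℝ φ x :=
    fderiv_const_smul (hφ.differentiableAt two_ne_zero) t
  simp only [Lop, sdv_const_smul hφ, inner_gradient_right, conj_trivial, hfderiv, smul_apply,
    Pi.smul_apply, smul_eq_mul, mul_left_comm _ t, ← Finset.mul_sum, mul_add]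

theorem Gop_le_Lop (hb : ∃ M, ∀ u, ‖b x u‖ ≤ M) (hr : ∃ M, ∀ u, |r x u| ≤ M) (u : U) :
    Gop a b r φ x ≤ Lop a b r u φ x := by
  obtain ⟨Mb, hMb⟩ := hb
  obtain ⟨Mr, hMr⟩ := hr
  refine add_le_add_right (ciInf_le ⟨-(Mb * ‖gradient φ x‖) + -(Mr * |φ x|), ?_⟩ u) _
  rintro - ⟨u, rfl⟩
  have hdrift : |(inner ℝ (b x u) (gradient φ x) : ℝ)| ≤ Mb * ‖gradient φ x‖ :=
    (abs_real_inner_le_norm _ _).trans (by gcongr; exact hMb u)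
  have hpotential : |r x u * φ x| ≤ Mr * |φ x| := by
    rw [abs_mul]
    gcongr
    exact hMr u
  exact add_le_add (neg_le_of_abs_le hdrift) (neg_le_of_abs_le hpotential)

theorem le_Gop [Nonempty U] {m : ℝ} (hm : ∀ u, m ≤ Lop a b r u φ x) : m ≤ Gop a b r φ x :=
  sub_le_iff_le_add'.1 (le_ciInf fun u => sub_le_iff_le_add'.2 (hm u))

theorem Gop_add_le [Nonempty U] (hb : ∃ M, ∀ u, ‖b x u‖ ≤ M) (hr : ∃ M, ∀ u, |r x u| ≤ M)
    (hφ : ContDiffAt ℝ 2 φ x) (hh : ContDiffAt ℝ 2 h x) {m : ℝ}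
    (hm : ∀ u, Lop a b r u h x ≤ m) : Gop a b r (φ + h) x ≤ Gop a b r φ x + m := by
  refine sub_le_iff_le_add.1 (le_Gop fun u => sub_le_iff_le_add.2 ?_)
  calc Gop a b r (φ + h) x ≤ Lop a b r u (φ + h) x := Gop_le_Lop hb hr u
    _ = Lop a b r u φ x + Lop a b r u h x := Lop_add hφ hh u
    _ ≤ Lop a b r u φ x + m := by gcongr; exact hm u

theorem Gop_const_smul (hφ : ContDiffAt ℝ 2 φ x) {t : ℝ} (ht : 0 ≤ t) :
    Gop a b r (t • φ) x = t * Gop a b r φ x := by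
  have hfderiv : fderiv ℝ (t • φ) x = t • fderiv ℝ φ x :=
    fderiv_const_smul (hφ.differentiableAt two_ne_zero) t
  simp only [Gop, sdv_const_smul hφ, inner_gradient_right, conj_trivial, hfderiv, smul_apply,
    Pi.smul_apply, smul_eq_mul, mul_left_comm _ t, ← Finset.mul_sum, ← mul_add,
    ← Real.mul_iInf_of_nonneg ht]

theorem Gop_smul_add_smul_le [Nonempty U] (hb : ∃ M, ∀ u, ‖b x u‖ ≤ M)
    (hr : ∃ M, ∀ u, |r x u| ≤ M) (hφ : ContDiffAt ℝ 2 φ x) (hh : ContDiffAt ℝ 2 h x)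
    {s t : ℝ} (hs : 0 ≤ s) (ht : 0 ≤ t) (hGφ : Gop a b r φ x ≤ lam * φ x)
    (hLh : ∀ u, Lop a b r u h x ≤ lam * h x) :
    Gop a b r (t • φ + s • h) x ≤ lam * (t • φ + s • h) x :=
  calc Gop a b r (t • φ + s • h) x
      ≤ Gop a b r (t • φ) x + s * (lam * h x) := by
        refine Gop_add_le (h := s • h) hb hr (hφ.const_smul t) (hh.const_smul s) fun u => ?_
        rw [Lop_const_smul hh]
        exact mul_le_mul_of_nonneg_left (hLh u) hs
    _ ≤ t * (lam * φ x) + s * (lam * h x) := by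
        rw [Gop_const_smul hφ ht]
        gcongr
    _ = lam * (t • φ + s • h) x := by
        simp only [Pi.add_apply, Pi.smul_apply, smul_eq_mul]
        ring

-- Equal values and gradients make the infima over `u` coincide, so only the Hessians compete.
theorem Gop_le_Gop_of_isLocalMax_sub (ha : ∀ z, 0 ≤ quadForm (a x) z)
    (hψ : ContDiffAt ℝ 2 ψ x) (hφ : ContDiffAt ℝ 2 φ x) (hmax : IsLocalMax (ψ - φ) x)
    (heq : ψ x = φ x) : Gop a b r ψ x ≤ Gop a b r φ x := by
  have hgradient : gradient ψ x = gradient φ x := by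
    have hfderiv : fderiv ℝ ψ x - fderiv ℝ φ x = 0 := by
      rw [← fderiv_sub (hψ.differentiableAt two_ne_zero) (hφ.differentiableAt two_ne_zero)]
      exact hmax.fderiv_eq_zero
    rw [gradient, gradient, sub_eq_zero.1 hfderiv]
  have htrace : ∑ i, ∑ j, a x i j * sdv ψ x i j ≤ ∑ i, ∑ j, a x i j * sdv φ x i j := by
    have hsub : ∑ i, ∑ j, a x i j * sdv (ψ - φ) x i j ≤ 0 :=
      sum_mul_sdv_nonpos_of_isLocalMax ha (hψ.sub hφ) hmax
    simpa only [sdv_sub hψ hφ, mul_sub, Finset.sum_sub_distrib, sub_nonpos] using hsub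
  rw [Gop, Gop, hgradient, heq]
  gcongr

theorem le_of_isLocalMax_sub (ha : ∀ z, 0 ≤ quadForm (a x) z)
    (hψ : ContDiffAt ℝ 2 ψ x) (hφ : ContDiffAt ℝ 2 φ x) (hmax : IsLocalMax (ψ - φ) x)
    (heq : ψ x = φ x) (hpos : 0 < ψ x) (hGψ : lamB * ψ x ≤ Gop a b r ψ x)
    (hGφ : Gop a b r φ x ≤ lam * φ x) : lamB ≤ lam := by
  refine le_of_mul_le_mul_right ?_ hpos
  calc lamB * ψ x ≤ Gop a b r ψ x := hGψ
    _ ≤ Gop a b r φ x := Gop_le_Gop_of_isLocalMax_sub ha hψ hφ hmax heq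
    _ ≤ lam * ψ x := heq ▸ hGφ

end SemilinearOperator

section Comparison

variable {d : ℕ} {U : Type*}

/-- `φ` is a positive classical supersolution of `G φ = lam φ` in `Ω`: a competitor in the infimum
defining the generalized principal eigenvalue of `Ω`. -/
structure IsPosSupersolution
    (a : EuclideanSpace ℝ (Fin d) → Matrix (Fin d) (Fin d) ℝ)
    (b : EuclideanSpace ℝ (Fin d) → U → EuclideanSpace ℝ (Fin d))
    (r : EuclideanSpace ℝ (Fin d) → U → ℝ) (Ω : Set (EuclideanSpace ℝ (Fin d))) (lam : ℝ)
    (φ : EuclideanSpace ℝ (Fin d) → ℝ) : Prop where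
  contDiffOn : ContDiffOn ℝ 2 φ Ω
  continuousOn : ContinuousOn φ (closure Ω)
  pos : ∀ x ∈ Ω, 0 < φ x
  Gop_le : ∀ x ∈ Ω, Gop a b r φ x ≤ lam * φ x

/-- `ψ` is a classical subsolution in `Ω` of the Dirichlet problem `G ψ = lam ψ` with zero boundary
values. Its sign inside `Ω` is unrestricted. -/
structure IsDirichletSubsolution
    (a : EuclideanSpace ℝ (Fin d) → Matrix (Fin d) (Fin d) ℝ)
    (b : EuclideanSpace ℝ (Fin d) → U → EuclideanSpace ℝ (Fin d))
    (r : EuclideanSpace ℝ (Fin d) → U → ℝ) (Ω : Set (EuclideanSpace ℝ (Fin d))) (lam : ℝ)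
    (ψ : EuclideanSpace ℝ (Fin d) → ℝ) : Prop where
  contDiffOn : ContDiffOn ℝ 2 ψ Ω
  continuousOn : ContinuousOn ψ (closure Ω)
  nonpos_frontier : ∀ x ∈ frontier Ω, ψ x ≤ 0
  le_Gop : ∀ x ∈ Ω, lam * ψ x ≤ Gop a b r ψ x

/-- `h` is a barrier for `Ω` outside `K`: it is positive up to the boundary, and in `Ω \ K` it is a
supersolution of `L_u h = lam h` for all controls `u` simultaneously. -/
structure IsBarrier
    (a : EuclideanSpace ℝ (Fin d) → Matrix (Fin d) (Fin d) ℝ)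
    (b : EuclideanSpace ℝ (Fin d) → U → EuclideanSpace ℝ (Fin d))
    (r : EuclideanSpace ℝ (Fin d) → U → ℝ) (Ω K : Set (EuclideanSpace ℝ (Fin d))) (lam : ℝ)
    (h : EuclideanSpace ℝ (Fin d) → ℝ) : Prop where
  contDiffOn : ContDiffOn ℝ 2 h Ω
  continuousOn : ContinuousOn h (closure Ω)
  pos : ∀ x ∈ closure Ω, 0 < h x
  Lop_le : ∀ x ∈ Ω \ K, ∀ u, Lop a b r u h x ≤ lam * h x

variable {a : EuclideanSpace ℝ (Fin d) → Matrix (Fin d) (Fin d) ℝ}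
  {b : EuclideanSpace ℝ (Fin d) → U → EuclideanSpace ℝ (Fin d)}
  {r : EuclideanSpace ℝ (Fin d) → U → ℝ} {ψ φ h : EuclideanSpace ℝ (Fin d) → ℝ}
  {Ω K : Set (EuclideanSpace ℝ (Fin d))} {lam lamB : ℝ}

theorem IsPosSupersolution.nonneg_closure (hφ : IsPosSupersolution a b r Ω lam φ) :
    ∀ x ∈ closure Ω, 0 ≤ φ x := fun x hx => by
  have hmaps : MapsTo φ Ω (Ici 0) := fun y hy => (hφ.pos y hy).le
  simpa using hmaps.closure_of_continuousOn hφ.continuousOn hx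

theorem exists_isMaxOn_div_of_pos {X : Type*} [TopologicalSpace X] {S : Set X} {f g : X → ℝ}
    (hS : IsCompact S) (hne : S.Nonempty) (hf : ContinuousOn f S) (hg : ContinuousOn g S)
    (hpos : ∀ x ∈ S, 0 < g x) : ∃ x ∈ S, ∀ y ∈ S, f y ≤ f x / g x * g y := by
  obtain ⟨x, hx, hmax⟩ := hS.exists_isMaxOn hne (hf.div hg fun y hy => (hpos y hy).ne')
  exact ⟨x, hx, fun y hy => (div_le_iff₀ (hpos y hy)).1 (hmax hy)⟩

theorem isLocalMax_sub_of_le {X : Type*} [TopologicalSpace X] {S : Set X} {f g : X → ℝ} {x : X}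
    (hS : S ∈ nhds x) (hle : ∀ y ∈ S, f y ≤ g y) (heq : f x = g x) : IsLocalMax (f - g) x := by
  filter_upwards [hS] with y hy
  simpa [heq] using hle y hy

-- Otherwise some `t • φ + s • h` with `s > 0` touches `ψ` from above at a point of `Ω \ K`.
theorem IsDirichletSubsolution.le_smul_of_le_smul_on [Nonempty U] (hΩ : IsOpen Ω)
    (hΩ_compact : IsCompact (closure Ω)) (ha : ∀ x ∈ Ω, ∀ z, 0 ≤ quadForm (a x) z)
    (hb : ∀ x ∈ Ω, ∃ M, ∀ u, ‖b x u‖ ≤ M) (hr : ∀ x ∈ Ω, ∃ M, ∀ u, |r x u| ≤ M)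
    (hψ : IsDirichletSubsolution a b r Ω lamB ψ) (hφ : IsPosSupersolution a b r Ω lam φ)
    (hh : IsBarrier a b r Ω K lam h) (hlam : lam < lamB) {t : ℝ} (ht : 0 ≤ t)
    (hK : ∀ x ∈ K, ψ x ≤ t * φ x) : ∀ x ∈ Ω, ψ x ≤ t * φ x := by
  by_contra! ⟨y, hy, hty⟩
  obtain ⟨x, hx, hmax⟩ := exists_isMaxOn_div_of_pos hΩ_compact ⟨y, subset_closure hy⟩
    (hψ.continuousOn.sub (hφ.continuousOn.const_smul t)) hh.continuousOn hh.pos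
  set s := (ψ x - t * φ x) / h x with hs_def
  have hs : 0 < s := pos_of_mul_pos_left ((sub_pos.2 hty).trans_le (hmax y (subset_closure hy)))
    (hh.pos y (subset_closure hy)).le
  have heq : ψ x = t * φ x + s * h x := by
    rw [hs_def, div_mul_cancel₀ _ (hh.pos x hx).ne']
    ring
  have htφ : 0 ≤ t * φ x := mul_nonneg ht (hφ.nonneg_closure x hx)
  have hsh : 0 < s * h x := mul_pos hs (hh.pos x hx)
  have hxΩ : x ∈ Ω := by
    by_contra hxΩ
    linarith [hψ.nonpos_frontier x (hΩ.frontier_eq ▸ ⟨hx, hxΩ⟩)]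
  have hxK : x ∉ K := fun hxK => by linarith [hK x hxK]
  have hΩx : Ω ∈ nhds x := hΩ.mem_nhds hxΩ
  have hφx := hφ.contDiffOn.contDiffAt hΩx
  have hhx := hh.contDiffOn.contDiffAt hΩx
  refine hlam.not_ge (le_of_isLocalMax_sub (φ := t • φ + s • h) (ha x hxΩ)
    (hψ.contDiffOn.contDiffAt hΩx) ((hφx.const_smul t).add (hhx.const_smul s))
    (isLocalMax_sub_of_le hΩx (fun z hz => ?_) heq) heq (by linarith) (hψ.le_Gop x hxΩ)
    (Gop_smul_add_smul_le (hb x hxΩ) (hr x hxΩ) hφx hhx hs.le ht (hφ.Gop_le x hxΩ)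
      (hh.Lop_le x ⟨hxΩ, hxK⟩)))
  exact sub_le_iff_le_add'.1 (hmax z (subset_closure hz))

theorem IsDirichletSubsolution.le_of_isPosSupersolution [Nonempty U] (hΩ : IsOpen Ω)
    (hΩ_compact : IsCompact (closure Ω)) (ha : ∀ x ∈ Ω, ∀ z, 0 ≤ quadForm (a x) z)
    (hb : ∀ x ∈ Ω, ∃ M, ∀ u, ‖b x u‖ ≤ M) (hr : ∀ x ∈ Ω, ∃ M, ∀ u, |r x u| ≤ M)
    (hψ : IsDirichletSubsolution a b r Ω lamB ψ) (hφ : IsPosSupersolution a b r Ω lam φ)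
    (hK : IsCompact K) (hKΩ : K ⊆ Ω) (hψ_pos : ∃ x ∈ K, 0 < ψ x)
    (hh : IsBarrier a b r Ω K lam h) : lamB ≤ lam := by
  by_contra! hlam
  obtain ⟨y, hy, hψy⟩ := hψ_pos
  have hKcl : K ⊆ closure Ω := hKΩ.trans subset_closure
  obtain ⟨x, hx, hmax⟩ := exists_isMaxOn_div_of_pos hK ⟨y, hy⟩ (hψ.continuousOn.mono hKcl)
    (hφ.continuousOn.mono hKcl) fun x hx => hφ.pos x (hKΩ hx)
  have hΩx : Ω ∈ nhds x := hΩ.mem_nhds (hKΩ hx)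
  have hφx : 0 < φ x := hφ.pos x (hKΩ hx)
  set t := ψ x / φ x
  have ht : 0 < t := pos_of_mul_pos_left (hψy.trans_le (hmax y hy)) (hφ.pos y (hKΩ hy)).le
  have heq : ψ x = t * φ x := (div_mul_cancel₀ _ hφx.ne').symm
  have hle : ∀ z ∈ Ω, ψ z ≤ t * φ z :=
    hψ.le_smul_of_le_smul_on hΩ hΩ_compact ha hb hr hφ hh hlam ht.le hmax
  have hφx_reg := hφ.contDiffOn.contDiffAt hΩx
  refine hlam.not_ge (le_of_isLocalMax_sub (φ := t • φ) (ha x (hKΩ hx))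
    (hψ.contDiffOn.contDiffAt hΩx) (hφx_reg.const_smul t) (isLocalMax_sub_of_le hΩx hle heq)
    heq (heq ▸ mul_pos ht hφx) (hψ.le_Gop x (hKΩ hx)) ?_)
  calc Gop a b r (t • φ) x = t * Gop a b r φ x := Gop_const_smul hφx_reg ht.le
    _ ≤ t * (lam * φ x) := by gcongr; exact hφ.Gop_le x (hKΩ hx)
    _ = lam * (t • φ) x := mul_left_comm _ _ _

end Comparison

section RadialBarrier

/-- The radial barrier of the ball of center `c` and radius `R`. For large `k` it is very concave
in the normal direction near the sphere, while its values stay in `[1, 2]` on the whole ball. -/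
noncomputable def radialBarrier {E : Type*} [SeminormedAddCommGroup E] (c : E) (R k : ℝ) (y : E) :
    ℝ :=
  2 - Real.exp (k * (‖y - c‖ ^ 2 - R ^ 2))

section Norm

variable {E : Type*} [SeminormedAddCommGroup E] {c x : E} {R k : ℝ}

theorem radialBarrier_lt_two : radialBarrier c R k x < 2 :=
  sub_lt_self _ (Real.exp_pos _)

theorem one_le_radialBarrier (hk : 0 ≤ k) (hx : ‖x - c‖ ≤ R) : 1 ≤ radialBarrier c R k x := by
  have hsq : ‖x - c‖ ^ 2 ≤ R ^ 2 := by gcongr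
  have hexp : Real.exp (k * (‖x - c‖ ^ 2 - R ^ 2)) ≤ 1 :=
    Real.exp_le_one_iff.2 (mul_nonpos_of_nonneg_of_nonpos hk (sub_nonpos.2 hsq))
  rw [radialBarrier]
  linarith

end Norm

section Derivative

variable {E : Type*} [NormedAddCommGroup E] [InnerProductSpace ℝ E] {c : E} {R k : ℝ}

theorem contDiff_radialBarrier {n : WithTop ℕ∞} : ContDiff ℝ n (radialBarrier c R k) := by
  have hsq : ContDiff ℝ n fun y : E => ‖y - c‖ ^ 2 :=
    (contDiff_id.sub contDiff_const).norm_sq ℝ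
  unfold radialBarrier
  fun_prop

theorem hasFDerivAt_exp_norm_sub_sq (c : E) (R k : ℝ) (y : E) :
    HasFDerivAt (fun y => Real.exp (k * (‖y - c‖ ^ 2 - R ^ 2)))
      ((2 * k * Real.exp (k * (‖y - c‖ ^ 2 - R ^ 2))) • innerSL ℝ (y - c)) y := by
  have hsq := ((hasFDerivAt_id y).sub_const c).norm_sq
  convert! ((hsq.sub_const (R ^ 2)).const_mul k).exp using 1
  ext v
  simp only [map_sub, smul_apply, sub_apply, coe_innerSL_apply, smul_eq_mul, id_eq,
    ContinuousLinearMap.comp_id, nsmul_eq_mul, Nat.cast_ofNat]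
  ring

theorem fderiv_radialBarrier (y v : E) :
    fderiv ℝ (radialBarrier c R k) y v
      = -(2 * k * Real.exp (k * (‖y - c‖ ^ 2 - R ^ 2)) * inner ℝ (y - c) v) := by
  have hfderiv : fderiv ℝ (radialBarrier c R k) y = _ :=
    ((hasFDerivAt_exp_norm_sub_sq c R k y).const_sub 2).fderiv
  simp only [hfderiv, neg_apply, smul_apply, innerSL_apply_apply, smul_eq_mul]

end Derivative

variable {d : ℕ} {c x : EuclideanSpace ℝ (Fin d)} {R k : ℝ}

theorem sdv_radialBarrier (i j : Fin d) :
    sdv (radialBarrier c R k) x i j = -(Real.exp (k * (‖x - c‖ ^ 2 - R ^ 2))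
      * (4 * k ^ 2 * ((x - c) i * (x - c) j) + 2 * k * if j = i then 1 else 0)) := by
  have hexp := (hasFDerivAt_exp_norm_sub_sq c R k x).const_mul (2 * k)
  have hinner := ((hasFDerivAt_id x).sub_const c).inner ℝ
    (hasFDerivAt_const (EuclideanSpace.single j (1 : ℝ)) x)
  have hfderiv : HasFDerivAt (fun y => -(2 * k * Real.exp (k * (‖y - c‖ ^ 2 - R ^ 2))
      * inner ℝ (y - c) (EuclideanSpace.single j (1 : ℝ)))) _ x := (hexp.mul hinner).neg
  simp only [sdv, fderiv_radialBarrier, hfderiv.fderiv]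
  simp only [id_eq, EuclideanSpace.inner_single_right, PiLp.sub_apply, Real.ringHom_apply, one_mul,
    map_sub, neg_apply, add_apply, smul_apply, sub_apply, coe_innerSL_apply, smul_eq_mul,
    ContinuousLinearMap.comp_apply, ContinuousLinearMap.prod_apply, ContinuousLinearMap.id_apply,
    zero_apply, fderivInnerCLM_apply, inner_zero_right, PiLp.single_apply, zero_add]
  split_ifs <;> ring

theorem Lop_radialBarrier {U : Type*} {a : EuclideanSpace ℝ (Fin d) → Matrix (Fin d) (Fin d) ℝ}
    {b : EuclideanSpace ℝ (Fin d) → U → EuclideanSpace ℝ (Fin d)}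
    {r : EuclideanSpace ℝ (Fin d) → U → ℝ} (u : U) :
    Lop a b r u (radialBarrier c R k) x
      = -(Real.exp (k * (‖x - c‖ ^ 2 - R ^ 2)) * (4 * k ^ 2 * quadForm (a x) (x - c)
          + 2 * k * (a x).trace + 2 * k * inner ℝ (x - c) (b x u)))
        + r x u * radialBarrier c R k x := by
  have hsum : ∑ i, ∑ j, a x i j * sdv (radialBarrier c R k) x i j
      = -(Real.exp (k * (‖x - c‖ ^ 2 - R ^ 2))
        * (4 * k ^ 2 * quadForm (a x) (x - c) + 2 * k * (a x).trace)) := by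
    calc ∑ i, ∑ j, a x i j * sdv (radialBarrier c R k) x i j
        = ∑ i, ∑ j, -(Real.exp (k * (‖x - c‖ ^ 2 - R ^ 2)) * (4 * k ^ 2
            * ((x - c) i * a x i j * (x - c) j) + 2 * k * if j = i then a x i j else 0)) := by
          refine Finset.sum_congr rfl fun i _ => Finset.sum_congr rfl fun j _ => ?_
          rw [sdv_radialBarrier]
          split_ifs <;> ring
      _ = _ := by
          simp [quadForm, Matrix.trace, ← Finset.mul_sum, Finset.sum_add_distrib]
  rw [Lop, hsum, inner_gradient_right, conj_trivial, fderiv_radialBarrier]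
  ring

theorem trace_nonneg_of_quadForm_nonneg {A : Matrix (Fin d) (Fin d) ℝ}
    (hA : ∀ z, 0 ≤ quadForm A z) : 0 ≤ A.trace :=
  Finset.sum_nonneg fun i _ => by
    simpa [quadForm] using hA (EuclideanSpace.single i 1)

variable {U : Type*} {a : EuclideanSpace ℝ (Fin d) → Matrix (Fin d) (Fin d) ℝ}
  {b : EuclideanSpace ℝ (Fin d) → U → EuclideanSpace ℝ (Fin d)}
  {r : EuclideanSpace ℝ (Fin d) → U → ℝ} {κ Mb Mr lam : ℝ}

theorem Lop_radialBarrier_le (hκ : 0 ≤ κ) (hk : 1 ≤ k) (hM : 0 ≤ Mr - lam)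
    (ha : ∀ z, κ * ‖z‖ ^ 2 ≤ quadForm (a x) z) {u : U} (hb : ‖b x u‖ ≤ Mb) (hr : r x u ≤ Mr)
    (hx : ‖x - c‖ ≤ R) (hx_half : R ^ 2 / 2 ≤ ‖x - c‖ ^ 2)
    (hkx : k * (R ^ 2 - ‖x - c‖ ^ 2) ≤ 1 / 2)
    (hk_large : R * Mb + 2 * (Mr - lam) ≤ k * (κ * R ^ 2)) :
    Lop a b r u (radialBarrier c R k) x ≤ lam * radialBarrier c R k x := by
  have hk0 : 0 ≤ k := zero_le_one.trans hk
  have htrace : 0 ≤ (a x).trace :=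
    trace_nonneg_of_quadForm_nonneg fun z => le_trans (by positivity) (ha z)
  have hquad : κ * (R ^ 2 / 2) ≤ quadForm (a x) (x - c) :=
    (mul_le_mul_of_nonneg_left hx_half hκ).trans (ha _)
  have hdrift : -(R * Mb) ≤ inner ℝ (x - c) (b x u) := by
    refine neg_le_of_abs_le ((abs_real_inner_le_norm _ _).trans ?_)
    gcongr
    exact (norm_nonneg _).trans hx
  have hexp : 1 / 2 ≤ Real.exp (k * (‖x - c‖ ^ 2 - R ^ 2)) := by
    linarith [Real.add_one_le_exp (k * (‖x - c‖ ^ 2 - R ^ 2))]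
  have hbracket : 4 * (Mr - lam) ≤ 4 * k ^ 2 * quadForm (a x) (x - c) + 2 * k * (a x).trace
      + 2 * k * inner ℝ (x - c) (b x u) := by
    calc 4 * (Mr - lam) ≤ k * (4 * (Mr - lam)) := le_mul_of_one_le_left (by linarith) hk
      _ ≤ k * (2 * (k * (κ * R ^ 2) - R * Mb)) := mul_le_mul_of_nonneg_left (by linarith) hk0
      _ = 4 * k ^ 2 * (κ * (R ^ 2 / 2)) + 2 * k * 0 + 2 * k * -(R * Mb) := by ring
      _ ≤ _ := by gcongr
  have hpotential : (r x u - lam) * radialBarrier c R k x ≤ (Mr - lam) * 2 := by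
    have hpos : 0 ≤ radialBarrier c R k x := zero_le_one.trans (one_le_radialBarrier hk0 hx)
    exact mul_le_mul (by linarith) radialBarrier_lt_two.le hpos hM
  have hprincipal := mul_le_mul hexp hbracket (by linarith) (Real.exp_pos _).le
  rw [Lop_radialBarrier]
  linarith

theorem exists_isBarrier_ball (hR : 0 < R) (hκ : 0 < κ)
    (ha : ∀ x ∈ ball c R, ∀ z, κ * ‖z‖ ^ 2 ≤ quadForm (a x) z)
    (hb : ∀ x ∈ ball c R, ∀ u, ‖b x u‖ ≤ Mb) (hr : ∀ x ∈ ball c R, ∀ u, r x u ≤ Mr) (lam : ℝ) :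
    ∃ ρ h, 0 < ρ ∧ ρ < R ∧ IsBarrier a b r (ball c R) (closedBall c ρ) lam h := by
  set M := max Mr lam
  obtain ⟨k, hk, hkR, hk_large⟩ : ∃ k : ℝ, 1 ≤ k ∧ 1 ≤ k * R ^ 2 ∧
      R * Mb + 2 * (M - lam) ≤ k * (κ * R ^ 2) := by
    have hlarge (m : ℝ) {p : ℝ} (hp : 0 < p) : ∀ᶠ k : ℝ in Filter.atTop, m ≤ k * p :=
      (Filter.tendsto_id.atTop_mul_const hp).eventually_ge_atTop m
    exact ((Filter.eventually_ge_atTop 1).and ((hlarge 1 (by positivity)).and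
      (hlarge _ (by positivity)))).exists
  have hk0 : 0 < k := by linarith
  obtain ⟨ρ, hρ0, hρR, hkρ⟩ : ∃ ρ, 0 < ρ ∧ ρ < R ∧ k * (R ^ 2 - ρ ^ 2) ≤ 1 / 2 := by
    have hcont : Continuous fun ρ : ℝ => k * (R ^ 2 - ρ ^ 2) := by fun_prop
    have hnear : ∀ᶠ ρ in nhdsWithin R (Iio R), k * (R ^ 2 - ρ ^ 2) < 1 / 2 :=
      hcont.continuousWithinAt.eventually_lt_const (by norm_num)
    obtain ⟨ρ, hρ, hkρ⟩ := (Filter.Eventually.and (Ioo_mem_nhdsLT hR) hnear).exists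
    exact ⟨ρ, hρ.1, hρ.2, hkρ.le⟩
  refine ⟨ρ, radialBarrier c R k, hρ0, hρR, contDiff_radialBarrier.contDiffOn,
    (contDiff_radialBarrier (n := 0)).continuous.continuousOn, fun x hx => ?_, ?_⟩
  · rw [closure_ball c hR.ne', mem_closedBall, dist_eq_norm] at hx
    exact zero_lt_one.trans_le (one_le_radialBarrier hk0.le hx)
  rintro x ⟨hx, hxρ⟩ u
  have hxR : ‖x - c‖ < R := by simpa [dist_eq_norm] using hx
  have hρx : ρ < ‖x - c‖ := by simpa [dist_eq_norm] using hxρ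
  have hkx : k * (R ^ 2 - ‖x - c‖ ^ 2) ≤ 1 / 2 := hkρ.trans' (by gcongr)
  have hx_half : R ^ 2 / 2 ≤ ‖x - c‖ ^ 2 := by
    refine le_of_mul_le_mul_left ?_ hk0
    linarith
  exact Lop_radialBarrier_le hκ.le hk (sub_nonneg.2 (le_max_right _ _)) (ha x hx) (hb x hx u)
    ((hr x hx u).trans (le_max_left _ _)) hxR.le hx_half hkx hk_large

end RadialBarrier

theorem exists_forall_norm_le_of_continuousOn_prod {X U F : Type*} [TopologicalSpace X]
    [TopologicalSpace U] [CompactSpace U] [SeminormedAddCommGroup F] {S : Set X} {f : X → U → F}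
    (hS : IsCompact S) (hf : ContinuousOn (fun p : X × U => f p.1 p.2) (S ×ˢ univ)) :
    ∃ M, ∀ x ∈ S, ∀ u, ‖f x u‖ ≤ M := by
  obtain ⟨M, hM⟩ := (hS.prod isCompact_univ).exists_bound_of_continuousOn hf
  exact ⟨M, fun x hx u => hM (x, u) ⟨hx, mem_univ u⟩⟩

theorem dirichlet_eigenvalue_eq_generalized_principal_eigenvalue_general
    {d : ℕ} {U : Type*} [Nonempty U] (c : EuclideanSpace ℝ (Fin d)) (R : ℝ) (hR : 0 < R)
    (a : EuclideanSpace ℝ (Fin d) → Matrix (Fin d) (Fin d) ℝ)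
    (b : EuclideanSpace ℝ (Fin d) → U → EuclideanSpace ℝ (Fin d))
    (r : EuclideanSpace ℝ (Fin d) → U → ℝ)
    (ha : ∃ κ > 0, ∀ x ∈ ball c R, ∀ z, κ * ‖z‖ ^ 2 ≤ quadForm (a x) z)
    (hb : ∃ M, ∀ x ∈ ball c R, ∀ u, ‖b x u‖ ≤ M) (hr : ∃ M, ∀ x ∈ ball c R, ∀ u, |r x u| ≤ M)
    (lamB : ℝ) (ψ : EuclideanSpace ℝ (Fin d) → ℝ)
    (hψ_reg : ContDiffOn ℝ 2 ψ (ball c R)) (hψ_cont : ContinuousOn ψ (closedBall c R))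
    (hψ_pos : ∀ x ∈ ball c R, 0 < ψ x) (hψ_bd : ∀ x ∈ sphere c R, ψ x = 0)
    (hψ_eq : ∀ x ∈ ball c R, Gop a b r ψ x = lamB * ψ x) :
    IsLeast { lam : ℝ | ∃ φ : EuclideanSpace ℝ (Fin d) → ℝ,
      ContDiffOn ℝ 2 φ (ball c R) ∧ ContinuousOn φ (closedBall c R) ∧
      (∀ x ∈ ball c R, 0 < φ x) ∧ (∀ x ∈ ball c R, Gop a b r φ x ≤ lam * φ x) } lamB := by
  obtain ⟨κ, hκ, ha⟩ := ha
  obtain ⟨Mb, hb⟩ := hb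
  obtain ⟨Mr, hr⟩ := hr
  refine ⟨⟨ψ, hψ_reg, hψ_cont, hψ_pos, fun x hx => (hψ_eq x hx).le⟩, ?_⟩
  rintro lam ⟨φ, hφ_reg, hφ_cont, hφ_pos, hφ_le⟩
  obtain ⟨ρ, h, hρ, hρR, hh⟩ := exists_isBarrier_ball hR hκ ha hb
    (fun x hx u => (le_abs_self _).trans (hr x hx u)) lam
  rw [← closure_ball c hR.ne'] at hψ_cont hφ_cont
  rw [← frontier_ball c hR.ne'] at hψ_bd
  have hψ : IsDirichletSubsolution a b r (ball c R) lamB ψ :=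
    ⟨hψ_reg, hψ_cont, fun x hx => (hψ_bd x hx).le, fun x hx => (hψ_eq x hx).ge⟩
  exact hψ.le_of_isPosSupersolution isOpen_ball isBounded_ball.isCompact_closure
    (fun x hx z => le_trans (by positivity) (ha x hx z)) (fun x hx => ⟨Mb, hb x hx⟩)
    (fun x hx => ⟨Mr, hr x hx⟩) ⟨hφ_reg, hφ_cont, hφ_pos, hφ_le⟩ (isCompact_closedBall c ρ)
    (closedBall_subset_ball hρR) ⟨c, mem_closedBall_self hρ.le, hψ_pos c (mem_ball_self hR)⟩ hh

/-- **Theorem 3.1 (identification part), classical-solution rendering on a ball.**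
Any Dirichlet eigenvalue with positive eigenfunction vanishing on the boundary equals the
generalized principal eigenvalue
`λ⁺(B) = inf { λ | ∃ φ ∈ C²(B) ∩ C(B̄), φ > 0 in B, Gφ ≤ λφ in B }`. -/
theorem dirichlet_eigenvalue_eq_generalized_principal_eigenvalue
    {d : ℕ} (hd : 1 ≤ d) {U : Type*} [MetricSpace U] [CompactSpace U] [Nonempty U]
    (c : EuclideanSpace ℝ (Fin d)) (R : ℝ) (hR : 0 < R)
    (a : EuclideanSpace ℝ (Fin d) → Matrix (Fin d) (Fin d) ℝ)
    (b : EuclideanSpace ℝ (Fin d) → U → EuclideanSpace ℝ (Fin d))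
    (r : EuclideanSpace ℝ (Fin d) → U → ℝ)
    -- `a` is Lipschitz on the closed ball
    (ha_lip : ∃ K : NNReal, ∀ i j, LipschitzOnWith K (fun x => a x i j) (closedBall c R))
    -- each `a(x)` is symmetric
    (ha_symm : ∀ x ∈ closedBall c R, (a x).IsSymm)
    -- uniform ellipticity
    (ha_ell : ∃ C : ℝ, 1 ≤ C ∧ ∀ x ∈ closedBall c R, ∀ z : EuclideanSpace ℝ (Fin d),
      C⁻¹ * ‖z‖ ^ 2 ≤ quadForm (a x) z ∧ quadForm (a x) z ≤ C * ‖z‖ ^ 2)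
    -- joint continuity of `b` and `r`
    (hb_cont : ContinuousOn (fun p : EuclideanSpace ℝ (Fin d) × U => b p.1 p.2)
      (closedBall c R ×ˢ univ))
    (hr_cont : ContinuousOn (fun p : EuclideanSpace ℝ (Fin d) × U => r p.1 p.2)
      (closedBall c R ×ˢ univ))
    -- Lipschitz continuity in `x`, uniformly in `u`
    (hb_lip : ∃ K : NNReal, ∀ u : U, LipschitzOnWith K (fun x => b x u) (closedBall c R))
    (hr_lip : ∃ K : NNReal, ∀ u : U, LipschitzOnWith K (fun x => r x u) (closedBall c R))
    -- the given eigenpair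
    (lamB : ℝ) (ψ : EuclideanSpace ℝ (Fin d) → ℝ)
    (hψ_reg : ContDiffOn ℝ 2 ψ (ball c R)) (hψ_cont : ContinuousOn ψ (closedBall c R))
    (hψ_pos : ∀ x ∈ ball c R, 0 < ψ x) (hψ_bd : ∀ x ∈ sphere c R, ψ x = 0)
    (hψ_eq : ∀ x ∈ ball c R, Gop a b r ψ x = lamB * ψ x) :
    lamB = sInf { lam : ℝ | ∃ φ : EuclideanSpace ℝ (Fin d) → ℝ,
      ContDiffOn ℝ 2 φ (ball c R) ∧ ContinuousOn φ (closedBall c R) ∧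
      (∀ x ∈ ball c R, 0 < φ x) ∧
      (∀ x ∈ ball c R, Gop a b r φ x ≤ lam * φ x) } := by
  obtain ⟨C, hC, ha⟩ := ha_ell
  obtain ⟨Mb, hb⟩ :=
    exists_forall_norm_le_of_continuousOn_prod (isCompact_closedBall c R) hb_cont
  obtain ⟨Mr, hr⟩ :=
    exists_forall_norm_le_of_continuousOn_prod (isCompact_closedBall c R) hr_cont
  exact (dirichlet_eigenvalue_eq_generalized_principal_eigenvalue_general c R hR a b r
    ⟨C⁻¹, by positivity, fun x hx z => (ha x (ball_subset_closedBall hx) z).1⟩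
    ⟨Mb, fun x hx => hb x (ball_subset_closedBall hx)⟩
    ⟨Mr, fun x hx => hr x (ball_subset_closedBall hx)⟩
    lamB ψ hψ_reg hψ_cont hψ_pos hψ_bd hψ_eq).csInf_eq.symm
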